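/- arXiv:2406.16733 — 2 statements merged into one kernel-verified Lean document; each statement's English description precedes it below -/
import Mathlib

section
/- Let G be a finite group acting transitively on a finite set Ω, let r, s > 0 be real numbers, and let X, Y ⊆ Ω with X nonempty. If |Y| < |Ω|·r / (|X|·s), then the number of elements g ∈ G with |X^g ∩ Y| < r is strictly greater than |G|·(1 − 1/s). -/
/-!
The mean of `|g • X ∩ Y|` over `g ∈ G` is `|X| |Y| / |Ω|`: count the triples
`(g, x, y)` with `x ∈ X`, `y ∈ Y` and `g • x = y` in two ways (`sum_ncard_smul_inter_mul`), using
that, by transitivity, each pair `(x, y)` is matched by exactly `|G| / |Ω|` group elements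
(`card_transporter_mul`). The hypothesis says that this mean is less than `r / s`, so Markov's
inequality shows that fewer than `|G| / s`
elements have `|g • X ∩ Y| ≥ r`.
-/

open scoped ENNReal Pointwise

/-- The proportion of tuples `A ∈ G^k` satisfying the predicate `P`. -/
noncomputable def tupleProp (G : Type*) [Fintype G] {k : ℕ} (P : (Fin k → G) → Prop) : ℝ :=
  (Nat.card {A : Fin k → G // P A} : ℝ) / (Fintype.card G : ℝ) ^ k

/-- The sphere of radius `t` centered at `ω` in the Schreier graph of the action of `G` on `Ω`
with respect to the tuple `A`: the set of points reachable from `ω` by applying a product of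
exactly `t` entries of `A`. -/
def sphereSet {G Ω : Type*} [Group G] [MulAction G Ω] {k : ℕ}
    (A : Fin k → G) (ω : Ω) (t : ℕ) : Set Ω :=
  {x | ∃ f : Fin t → Fin k, (List.ofFn (A ∘ f)).prod • ω = x}

/-- The diameter of the Schreier graph of the action of `G` on `Ω` with respect to the tuple
`A ∈ G^k`: the least natural number `D` such that any `y` can be reached from any `x` by applying
a product of `d ≤ D` entries of `A`, and `∞` if no such `D` exists. -/
noncomputable def schreierDiam (G Ω : Type*) [Group G] [MulAction G Ω] {k : ℕ}
    (A : Fin k → G) : ℕ∞ :=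
  sInf {D : ℕ∞ | ∃ D₀ : ℕ, D = (D₀ : ℕ∞) ∧ ∀ x y : Ω, ∃ d : ℕ, d ≤ D₀ ∧
    ∃ f : Fin d → Fin k, (List.ofFn (A ∘ f)).prod • x = y}

/-- In a transitive action, the fibres of `g ↦ g • x` are left translates of each other, so they all
have `|G| / |Ω|` elements. -/
lemma card_transporter_mul {G Ω : Type*} [Group G] [Fintype G] [MulAction G Ω] [Fintype Ω]
    [DecidableEq Ω] [MulAction.IsPretransitive G Ω] (x y : Ω) :
    (Finset.univ.filter fun g : G => g • x = y).card * Fintype.card Ω = Fintype.card G := by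
  have hconst : ∀ z : Ω, (Finset.univ.filter fun g : G => g • x = z).card
      = (Finset.univ.filter fun g : G => g • x = y).card := by
    intro z
    obtain ⟨h, rfl⟩ := MulAction.exists_smul_eq G y z
    refine (Finset.card_equiv (Equiv.mulLeft h) fun g => ?_).symm
    simp [mul_smul]
  have hsum := Finset.card_eq_sum_card_fiberwise (f := fun g : G => g • x)
    (s := Finset.univ) (t := Finset.univ) (fun _ _ => by simp)
  simp only [hconst, Finset.sum_const, Finset.card_univ, smul_eq_mul] at hsum
  rw [hsum, mul_comm]

lemma sum_ncard_smul_inter_mul {G Ω : Type*} [Group G] [Fintype G] [MulAction G Ω] [Fintype Ω]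
    [MulAction.IsPretransitive G Ω] (X Y : Set Ω) :
    (∑ g : G, ((g • X) ∩ Y).ncard) * Fintype.card Ω
      = X.ncard * Y.ncard * Fintype.card G := by
  classical
  have hcard : ∀ g : G, ((g • X) ∩ Y).ncard
      = ∑ x ∈ X.toFinset, ∑ y ∈ Y.toFinset, if g • x = y then 1 else 0 := by
    intro g
    have himage : (g • X) ∩ Y = (fun x => g • x) '' {x | x ∈ X ∧ g • x ∈ Y} := by
      ext z
      simp only [Set.mem_inter_iff, Set.mem_smul_set, Set.mem_image, Set.mem_ofPred_eq]
      constructor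
      · rintro ⟨⟨x, hx, rfl⟩, hz⟩
        exact ⟨x, ⟨hx, hz⟩, rfl⟩
      · rintro ⟨x, ⟨hx, hz⟩, rfl⟩
        exact ⟨⟨x, hx, rfl⟩, hz⟩
    rw [himage, Set.ncard_image_of_injective _ (MulAction.injective g),
      Set.ncard_eq_toFinset_card']
    simp only [Finset.sum_ite_eq, Set.mem_toFinset]
    rw [← Finset.card_filter]
    congr 1
    ext x
    simp
  simp only [hcard]
  rw [Finset.sum_comm, Finset.sum_congr rfl fun x _ => Finset.sum_comm]
  simp only [← Finset.card_filter, Finset.sum_mul]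
  refine (Finset.sum_congr rfl fun x _ => Finset.sum_congr rfl fun y _ =>
    card_transporter_mul (G := G) x y).trans ?_
  simp [Set.ncard_eq_toFinset_card', mul_assoc]

/-- If `|Y| < |Ω|·r / (|X|·s)`, then strictly more than `|G|·(1 − 1/s)` elements `g ∈ G`
satisfy `|X^g ∩ Y| < r`. -/
theorem many_small_intersections {G Ω : Type*} [Group G] [Fintype G]
    [MulAction G Ω] [Fintype Ω]
    (htrans : MulAction.IsPretransitive G Ω)
    (r s : ℝ) (hr : 0 < r) (hs : 0 < s) (X Y : Set Ω) (hX : X.Nonempty)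
    (hY : (Y.ncard : ℝ) < (Fintype.card Ω : ℝ) * r / ((X.ncard : ℝ) * s)) :
    (Fintype.card G : ℝ) * (1 - 1 / s) <
      (Nat.card {g : G // (((g • X) ∩ Y).ncard : ℝ) < r} : ℝ) := by
  classical
  have hXpos : (0 : ℝ) < X.ncard := by exact_mod_cast (Set.ncard_pos).2 hX
  have hΩpos : (0 : ℝ) < Fintype.card Ω := by
    exact_mod_cast Fintype.card_pos_iff.2 ⟨hX.some⟩
  have hGpos : (0 : ℝ) < Fintype.card G := by exact_mod_cast Fintype.card_pos
  set f : G → ℝ := fun g => (((g • X) ∩ Y).ncard : ℝ) with hf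
  have hsum : (∑ g : G, f g) * Fintype.card Ω = X.ncard * Y.ncard * Fintype.card G := by
    simp only [hf]
    exact_mod_cast sum_ncard_smul_inter_mul (G := G) X Y
  have hmarkov : ((Finset.univ.filter fun g => ¬ f g < r).card : ℝ) * r ≤ ∑ g : G, f g := by
    rw [← nsmul_eq_mul]
    refine (Finset.card_nsmul_le_sum _ f r fun g hg => ?_).trans
      (Finset.sum_le_sum_of_subset_of_nonneg (Finset.filter_subset _ _) fun g _ _ => ?_)
    · simpa using hg
    · exact Nat.cast_nonneg _
  have hsplit : ((Finset.univ.filter fun g => f g < r).card : ℝ)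
      + ((Finset.univ.filter fun g => ¬ f g < r).card : ℝ) = Fintype.card G := by
    exact_mod_cast Finset.card_filter_add_card_filter_not (s := Finset.univ) (fun g => f g < r)
  rw [Nat.card_eq_fintype_card, Fintype.card_subtype]
  rw [lt_div_iff₀ (mul_pos hXpos hs)] at hY
  have hbad : ((Finset.univ.filter fun g => ¬ f g < r).card : ℝ) < Fintype.card G / s := by
    rw [lt_div_iff₀ hs]
    refine lt_of_mul_lt_mul_right ?_ (mul_pos hr hΩpos).le
    calc ((Finset.univ.filter fun g => ¬ f g < r).card : ℝ) * s * (r * Fintype.card Ω)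
        = ((Finset.univ.filter fun g => ¬ f g < r).card : ℝ) * r * (Fintype.card Ω * s) := by ring
      _ ≤ (∑ g : G, f g) * (Fintype.card Ω * s) := by gcongr
      _ = Y.ncard * (X.ncard * s) * Fintype.card G := by
        rw [← mul_assoc, hsum]; ring
      _ < Fintype.card Ω * r * Fintype.card G := by gcongr
      _ = Fintype.card G * (r * Fintype.card Ω) := by ring
  have hexpand : (Fintype.card G : ℝ) * (1 - 1 / s) = Fintype.card G - Fintype.card G / s := by ring
  rw [hexpand]
  linarith
end

section
/- For every ε ∈ (0,1) there exists C > 0 such that: for every η > 0 there exists N such that for every finite group G acting transitively on a finite set Ω with |Ω| = n ≥ N, every integer k ≥ (log n)^(1+ε), and every ω ∈ Ω, the proportion of tuples A ∈ G^k for which |S_A(ω, ⌊C·(log n)/(log k)⌋)| ≥ n / k^(2/ε) is at least 1 − η. -/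
open scoped ENNReal Pointwise

section Counting

variable {G Ω : Type} [Group G] [Fintype G] [MulAction G Ω] [Fintype Ω]

open Classical in
theorem card_smul_eq (htr : MulAction.IsPretransitive G Ω) (x y : Ω) :
    (Finset.univ.filter fun g : G => g • x = y).card * Fintype.card Ω = Fintype.card G := by
  obtain ⟨h, rfl⟩ := htr.exists_smul_eq x y
  have e : {g : G // g • x = h • x} ≃ MulAction.stabilizer G x :=
    (Equiv.mulLeft h⁻¹).subtypeEquiv (fun g => by
      simp [MulAction.mem_stabilizer_iff, mul_smul, inv_smul_eq_iff])
  have h1 := MulAction.card_orbit_mul_card_stabilizer_eq_card_group G x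
  have h2 : Fintype.card (MulAction.orbit G x) = Fintype.card Ω := by
    refine Fintype.card_congr ((Equiv.setCongr (MulAction.orbit_eq_univ G x)).trans
      (Equiv.Set.univ Ω))
  rw [← Fintype.card_subtype, Fintype.card_congr e, ← h1, h2, mul_comm]

open Classical in
/-- If `x` and `y` do not depend on the `p`-th generator, then `A p • x A = y A` holds with
probability exactly `1 / |Ω|`. -/
theorem card_coord_smul_eq (htr : MulAction.IsPretransitive G Ω) {k : ℕ} (p : Fin k)
    (x y : (Fin k → G) → Ω)
    (hx : ∀ A B : Fin k → G, (∀ i, i ≠ p → A i = B i) → x A = x B)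
    (hy : ∀ A B : Fin k → G, (∀ i, i ≠ p → A i = B i) → y A = y B) :
    (Finset.univ.filter fun A : Fin k → G => A p • x A = y A).card * Fintype.card Ω
      = Fintype.card G ^ k := by
  let E := Equiv.funSplitAt p G
  let r : ({j // j ≠ p} → G) → (Fin k → G) := fun B => E.symm (1, B)
  have hr : ∀ g B i, i ≠ p → E.symm (g, B) i = r B i := by
    intro g B i hi
    simp [E, r, hi]
  have hp : ∀ g B, E.symm (g, B) p = g := by
    intro g B
    simp [E]
  have h1 : (Finset.univ.filter fun A : Fin k → G => A p • x A = y A).card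
      = ∑ B : {j // j ≠ p} → G,
        (Finset.univ.filter fun g : G => g • x (r B) = y (r B)).card := by
    rw [Finset.card_filter, ← E.symm.sum_comp, Fintype.sum_prod_type_right]
    refine Finset.sum_congr rfl fun B _ => ?_
    rw [Finset.card_filter]
    refine Finset.sum_congr rfl fun g _ => ?_
    rw [hp, hx _ _ (hr g B), hy _ _ (hr g B)]
  have h2 : Fintype.card G ^ k = Fintype.card G * Fintype.card ({j // j ≠ p} → G) := by
    rw [← Fintype.card_prod, ← Fintype.card_congr E]
    simp
  rw [h1, Finset.sum_mul, h2]
  simp [card_smul_eq htr, mul_comm]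

omit [Fintype G] in
theorem ofFn_prod_congr {k t : ℕ} (p : Fin k) (u : Fin t → Fin k) (hu : ∀ i, u i ≠ p)
    (A B : Fin k → G) (h : ∀ i, i ≠ p → A i = B i) :
    (List.ofFn (A ∘ u)).prod = (List.ofFn (B ∘ u)).prod := by
  congr 2
  funext i
  exact h _ (hu i)

open Classical in
/-- Two distinct words, without repeated letters and with no letter occurring in different
positions, send `ω` to the same point with probability at most `1 / |Ω|`. -/
theorem card_collision_le (htr : MulAction.IsPretransitive G Ω) (ω : Ω) {k t : ℕ}
    (u u' : Fin t → Fin k) (h1 : ∀ i j, u i = u j → i = j) (h2 : ∀ i j, u i = u' j → i = j)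
    (hne : u ≠ u') :
    (Finset.univ.filter fun A : Fin k → G =>
      (List.ofFn (A ∘ u)).prod • ω = (List.ofFn (A ∘ u')).prod • ω).card * Fintype.card Ω
      ≤ Fintype.card G ^ k := by
  induction t with
  | zero => exact absurd (Subsingleton.elim _ _) hne
  | succ t ih =>
    -- A common outermost letter can be cancelled; if the outermost letters differ, the
    -- generator `A (u 0)` is used nowhere else.
    by_cases h0 : u' 0 = u 0
    · have := ih (u ∘ Fin.succ) (u' ∘ Fin.succ)
        (fun i j h => Fin.succ_injective _ (h1 _ _ h))
        (fun i j h => Fin.succ_injective _ (h2 _ _ h))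
        (fun h => hne (by
          funext i
          refine Fin.cases h0.symm (fun j => congrFun h j) i))
      refine le_trans (le_of_eq ?_) this
      congr 2
      ext A
      simp only [List.ofFn_succ, List.prod_cons, mul_smul, Function.comp_apply, h0,
        smul_left_cancel_iff, Finset.mem_filter]
      rfl
    · have := card_coord_smul_eq htr (u 0)
        (fun A => (List.ofFn (A ∘ (u ∘ Fin.succ))).prod • ω)
        (fun A => (List.ofFn (A ∘ u')).prod • ω)
        (fun A B h => by
          rw [ofFn_prod_congr (u 0) _ _ A B h]
          intro i hi
          exact Fin.succ_ne_zero i (h1 _ _ hi))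
        (fun A B h => by
          rw [ofFn_prod_congr (u 0) _ _ A B h]
          intro i hi
          have := h2 _ _ hi.symm
          subst this
          exact h0 hi)
      refine le_trans (le_of_eq ?_) this.le
      congr 2
      ext A
      simp only [List.ofFn_succ, List.prod_cons, mul_smul, Function.comp_apply,
        Finset.mem_filter]
      rfl

omit [Fintype Ω] in
open Classical in
/-- Cauchy–Schwarz: a map from a set of size `M` to one of size `s` has at least `M² / s`
colliding ordered pairs. -/
theorem sq_card_le_card_mul_collisions {W : Type} [Fintype W] (v : W → Ω) (S : Finset Ω)
    (hS : ∀ a, v a ∈ S) :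
    Fintype.card W ^ 2 ≤ S.card * ∑ a, ∑ b, (if v a = v b then 1 else 0 : ℕ) := by
  have h1 : Fintype.card W = ∑ x ∈ S, ∑ a, (if v a = x then 1 else 0 : ℕ) := by
    rw [Finset.sum_comm]
    simp [hS]
  have h2 : ∑ a, ∑ b, (if v a = v b then 1 else 0 : ℕ)
      = ∑ x ∈ S, (∑ a, (if v a = x then 1 else 0 : ℕ)) ^ 2 := by
    simp_rw [sq, Finset.sum_mul_sum]
    rw [Finset.sum_comm (s := S)]
    refine Finset.sum_congr rfl fun a _ => ?_
    rw [Finset.sum_comm (s := S)]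
    refine Finset.sum_congr rfl fun b _ => ?_
    simp [hS, eq_comm]
  rw [h2, h1]
  exact sq_sum_le_card_mul_sum_sq

open Classical in
/-- A sphere of radius `t` has fewer than `|Ω| / κ` points with probability at most `2 / κ`,
provided that `t` disjoint blocks of `m` generators exist and give `m ^ t ≥ |Ω|` words. -/
theorem card_small_sphere_le (htr : MulAction.IsPretransitive G Ω) (ω : Ω) {k t m : ℕ}
    (hk : t * m ≤ k) (hM : Fintype.card Ω ≤ m ^ t) (κ : ℝ) (hκ : 0 < κ) :
    ((Finset.univ.filter fun A : Fin k → G =>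
      ((sphereSet A ω t).ncard : ℝ) < Fintype.card Ω / κ).card : ℝ) * κ
      ≤ 2 * (Fintype.card G : ℝ) ^ k := by
  set n := Fintype.card Ω with hn
  have hn0 : 0 < n := Fintype.card_pos_iff.mpr ⟨ω⟩
  let e : Fin t × Fin m → Fin k := fun q => Fin.castLE hk (finProdFinEquiv q)
  have he : Function.Injective e :=
    (Fin.castLE_injective hk).comp finProdFinEquiv.injective
  let w : (Fin t → Fin m) → Fin t → Fin k := fun a i => e (i, a i)
  have hw : ∀ a b i j, w a i = w b j → i = j := fun a b i j h => congrArg Prod.fst (he h)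
  have hwne : ∀ a b, a ≠ b → w a ≠ w b := fun a b hab h =>
    hab (funext fun i => congrArg Prod.snd (he (congrFun h i)))
  let v : (Fin k → G) → (Fin t → Fin m) → Ω := fun A a => (List.ofFn (A ∘ w a)).prod • ω
  let X : (Fin k → G) → ℕ := fun A => ∑ a, ∑ b, (if v A a = v A b then 1 else 0 : ℕ)
  set M := m ^ t with hMdef
  have hcard : Fintype.card (Fin t → Fin m) = M := by simp [hMdef]
  have hM0 : 0 < M := hn0.trans_le hM
  -- The second moment bound.
  have hX : (∑ A, X A) * n ≤ Fintype.card G ^ k * (2 * M ^ 2) := by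
    have hsw : ∑ A, X A = ∑ a, ∑ b,
        (Finset.univ.filter fun A : Fin k → G => v A a = v A b).card := by
      simp only [X, Finset.card_filter]
      rw [Finset.sum_comm]
      exact Finset.sum_congr rfl fun a _ => Finset.sum_comm
    have hpair : ∀ a b, (Finset.univ.filter fun A : Fin k → G => v A a = v A b).card * n
        ≤ Fintype.card G ^ k * (1 + if a = b then n else 0) := by
      intro a b
      by_cases hab : a = b
      · subst hab
        simp only [Finset.filter_true, if_true, Finset.card_univ, Fintype.card_fun,
          Fintype.card_fin]
        exact Nat.mul_le_mul_left _ (Nat.le_add_left _ _)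
      · simp only [hab, if_false, add_zero, mul_one]
        exact card_collision_le htr ω (w a) (w b) (fun i j => hw a a i j)
          (fun i j => hw a b i j) (hwne a b hab)
    calc (∑ A, X A) * n
        = ∑ a, ∑ b, (Finset.univ.filter fun A : Fin k → G => v A a = v A b).card * n := by
          rw [hsw, Finset.sum_mul]
          exact Finset.sum_congr rfl fun a _ => Finset.sum_mul _ _ _
      _ ≤ ∑ a : Fin t → Fin m, ∑ b : Fin t → Fin m,
            Fintype.card G ^ k * (1 + if a = b then n else 0) :=
          Finset.sum_le_sum fun a _ => Finset.sum_le_sum fun b _ => hpair a b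
      _ = Fintype.card G ^ k * (M * (M + n)) := by
          simp_rw [← Finset.mul_sum, Finset.sum_add_distrib]
          simp only [Finset.sum_ite_eq, Finset.mem_univ, if_true, Finset.sum_const,
            Finset.card_univ, hcard, smul_eq_mul, mul_one]
          ring
      _ ≤ Fintype.card G ^ k * (2 * M ^ 2) := by
          refine Nat.mul_le_mul_left _ ?_
          nlinarith
  -- Markov's inequality.
  set Bad := Finset.univ.filter fun A : Fin k → G =>
      ((sphereSet A ω t).ncard : ℝ) < n / κ with hBad
  have hXbad : ∀ A ∈ Bad, (M : ℝ) ^ 2 * κ ≤ n * X A := by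
    intro A hA
    have hlt : ((sphereSet A ω t).ncard : ℝ) < n / κ := (Finset.mem_filter.mp hA).2
    have hcs := sq_card_le_card_mul_collisions (v A) (sphereSet A ω t).toFinset
      (fun a => by
        rw [Set.mem_toFinset]
        exact ⟨w a, rfl⟩)
    rw [hcard, ← Set.ncard_eq_toFinset_card'] at hcs
    have hcs' : (M : ℝ) ^ 2 ≤ (sphereSet A ω t).ncard * (X A : ℝ) := by
      exact_mod_cast hcs
    have h3 : (M : ℝ) ^ 2 ≤ n / κ * X A :=
      hcs'.trans (mul_le_mul_of_nonneg_right hlt.le (Nat.cast_nonneg _))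
    calc (M : ℝ) ^ 2 * κ ≤ n / κ * X A * κ := mul_le_mul_of_nonneg_right h3 hκ.le
      _ = n * X A := by field_simp
  have hsum : (Bad.card : ℝ) * ((M : ℝ) ^ 2 * κ) ≤ n * ∑ A, (X A : ℝ) := by
    calc (Bad.card : ℝ) * ((M : ℝ) ^ 2 * κ) = ∑ A ∈ Bad, (M : ℝ) ^ 2 * κ := by simp
      _ ≤ ∑ A ∈ Bad, n * (X A : ℝ) := Finset.sum_le_sum hXbad
      _ ≤ ∑ A, n * (X A : ℝ) :=
          Finset.sum_le_sum_of_subset_of_nonneg (Finset.subset_univ _)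
            (fun _ _ _ => by positivity)
      _ = n * ∑ A, (X A : ℝ) := by rw [Finset.mul_sum]
  have hX' : (∑ A, (X A : ℝ)) * n ≤ (Fintype.card G : ℝ) ^ k * (2 * (M : ℝ) ^ 2) := by
    exact_mod_cast hX
  have hMpos : (0 : ℝ) < (M : ℝ) ^ 2 := by positivity
  refine le_of_mul_le_mul_right ?_ hMpos
  nlinarith

end Counting

/-- The choice of the block size `m = ⌈k ^ δ⌉`, where `δ = ε / (1 + ε)` and `L = log n`. -/
theorem exists_block_size {ε : ℝ} (hε : 0 < ε) {n k : ℕ} (hn : 0 < n)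
    (hL1 : 1 ≤ Real.log n) (hk : (Real.log n) ^ ((1 : ℝ) + ε) ≤ (k : ℝ))
    (hK : 2 * ((1 + ε) / ε + 1) ≤ Real.log k) (hKL : Real.log k ≤ Real.log n) :
    ∃ m : ℕ, ⌊((1 + ε) / ε + 1) * Real.log n / Real.log k⌋₊ * m ≤ k ∧
      n ≤ m ^ ⌊((1 + ε) / ε + 1) * Real.log n / Real.log k⌋₊ := by
  set L := Real.log n with hL
  set K := Real.log k with hKdef
  set C := (1 + ε) / ε + 1 with hC
  set t := ⌊C * L / K⌋₊ with ht
  set δ := ε / (1 + ε) with hδ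
  have hδ0 : 0 < δ := by positivity
  have hC0 : 0 < C := by positivity
  have hK0 : 0 < K := by linarith
  have hL0 : 0 < L := by linarith
  have hk1 : (1 : ℝ) ≤ k := (Real.one_le_rpow hL1 (by linarith)).trans hk
  have hk0 : (0 : ℝ) < k := by linarith
  have hkδ : (1 : ℝ) ≤ (k : ℝ) ^ δ := Real.one_le_rpow hk1 hδ0.le
  have hLk : L ≤ (k : ℝ) ^ (1 - δ) := by
    have h1 : (1 + ε) * (1 - δ) = 1 := by
      rw [hδ]; field_simp; ring
    have h1δ : 0 ≤ 1 - δ := by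
      by_contra h
      push Not at h
      nlinarith
    calc L = (L ^ (1 + ε)) ^ (1 - δ) := by
          rw [← Real.rpow_mul hL0.le, h1, Real.rpow_one]
      _ ≤ (k : ℝ) ^ (1 - δ) := Real.rpow_le_rpow (by positivity) hk h1δ
  refine ⟨⌈(k : ℝ) ^ δ⌉₊, ?_, ?_⟩
  · have hm : (⌈(k : ℝ) ^ δ⌉₊ : ℝ) ≤ 2 * (k : ℝ) ^ δ := by
      have := Nat.ceil_lt_add_one (a := (k : ℝ) ^ δ) (by positivity)
      linarith
    have htle : (t : ℝ) ≤ C * L / K := Nat.floor_le (by positivity)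
    have h2 : C * L / K ≤ L / 2 := by
      rw [div_le_div_iff₀ hK0 two_pos]
      nlinarith
    have : (t : ℝ) * ⌈(k : ℝ) ^ δ⌉₊ ≤ k := by
      calc (t : ℝ) * ⌈(k : ℝ) ^ δ⌉₊ ≤ (L / 2) * (2 * (k : ℝ) ^ δ) :=
            mul_le_mul (htle.trans h2) hm (by positivity) (by positivity)
        _ = L * (k : ℝ) ^ δ := by ring
        _ ≤ (k : ℝ) ^ (1 - δ) * (k : ℝ) ^ δ := by gcongr
        _ = k := by rw [← Real.rpow_add hk0]; simp
    exact_mod_cast this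
  · have htge : L / (δ * K) ≤ t := by
      have h1 := Nat.lt_floor_add_one (C * L / K)
      have h2 : C * L / K = L / (δ * K) + L / K := by
        rw [hC, hδ]; field_simp
      have h3 : 1 ≤ L / K := (one_le_div hK0).mpr hKL
      linarith
    have h4 : L ≤ δ * t * K := by
      rw [div_le_iff₀ (by positivity)] at htge
      linarith
    have h5 : (n : ℝ) ≤ ((k : ℝ) ^ δ) ^ t := by
      rw [← Real.rpow_mul_natCast hk0.le, Real.rpow_def_of_pos hk0,
        ← Real.exp_log (Nat.cast_pos.mpr hn : (0 : ℝ) < n)]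
      refine Real.exp_le_exp.mpr ?_
      linarith
    have h6 : (n : ℝ) ≤ (⌈(k : ℝ) ^ δ⌉₊ : ℝ) ^ t :=
      h5.trans (pow_le_pow_left₀ (by positivity) (Nat.le_ceil _) t)
    exact_mod_cast h6

/-- Growth of spheres: for every `ε ∈ (0,1)` there exists `C > 0` such that, for every `η > 0`
and all large enough `n`, for every finite group `G` acting transitively on a finite set `Ω` of
size `n`, every `k ≥ (log n)^(1+ε)` and every `ω ∈ Ω`, the sphere of radius
`⌊C·(log n)/(log k)⌋` around `ω` has at least `n / k^(2/ε)` points with probability at least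
`1 − η`. -/
theorem random_schreier_sphere_growth_weak :
    ∀ ε : ℝ, ε ∈ Set.Ioo (0 : ℝ) 1 → ∃ C : ℝ, 0 < C ∧ ∀ η : ℝ, 0 < η → ∃ N : ℕ,
      ∀ (G Ω : Type) [Group G] [Fintype G] [MulAction G Ω] [Fintype Ω],
        MulAction.IsPretransitive G Ω → N ≤ Fintype.card Ω →
        ∀ k : ℕ, (Real.log (Fintype.card Ω)) ^ ((1 : ℝ) + ε) ≤ (k : ℝ) →
        ∀ ω : Ω,
        1 - η ≤ tupleProp G (fun A : Fin k → G =>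
          (Fintype.card Ω : ℝ) / (k : ℝ) ^ (2 / ε) ≤
            ((sphereSet A ω ⌊C * Real.log (Fintype.card Ω) / Real.log k⌋₊).ncard : ℝ)) := by
  intro ε hε
  obtain ⟨hε0, hε1⟩ := hε
  set C : ℝ := (1 + ε) / ε + 1 with hC
  refine ⟨C, by positivity, fun η hη => ?_⟩
  -- The bound `log n ≥ T` makes `log k ≥ 2 * C` and `k ≥ 2 / η`.
  set T : ℝ := Real.exp (2 * C) + 2 / η + 1 with hT
  have hexp : 0 < Real.exp (2 * C) := Real.exp_pos _
  have hη2 : 0 < 2 / η := by positivity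
  refine ⟨⌈Real.exp T⌉₊, ?_⟩
  intro G Ω _ _ _ _ htr hN k hk ω
  classical
  set n := Fintype.card Ω with hn
  have hn0 : 0 < n := Fintype.card_pos_iff.mpr ⟨ω⟩
  have hLT : T ≤ Real.log n := by
    rw [Real.le_log_iff_exp_le (by exact_mod_cast hn0)]
    exact (Nat.le_ceil _).trans (by exact_mod_cast hN)
  have hL1 : 1 ≤ Real.log n := by linarith
  have hLk : Real.log n ≤ k :=
    (Real.self_le_rpow_of_one_le hL1 (by linarith)).trans hk
  have hk1 : (1 : ℝ) ≤ k := hL1.trans hLk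
  have hk0 : (0 : ℝ) < k := by linarith
  have h2ε : 1 ≤ 2 / ε := by
    rw [one_le_div hε0]
    linarith
  set κ : ℝ := (k : ℝ) ^ (2 / ε) with hκ
  have hκk : (k : ℝ) ≤ κ := Real.self_le_rpow_of_one_le hk1 h2ε
  have hκ0 : 0 < κ := hk0.trans_le hκk
  have hG : (0 : ℝ) < (Fintype.card G : ℝ) ^ k := by
    have : 0 < Fintype.card G := Fintype.card_pos
    positivity
  set t := ⌊C * Real.log n / Real.log k⌋₊ with ht
  -- It suffices to bound the number of tuples with a small sphere.
  suffices hbad : ((Finset.univ.filter fun A : Fin k → G =>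
      ((sphereSet A ω t).ncard : ℝ) < n / κ).card : ℝ) ≤ η * (Fintype.card G : ℝ) ^ k by
    have hsplit := Finset.card_filter_add_card_filter_not (s := (Finset.univ : Finset (Fin k → G)))
      (fun A => (n : ℝ) / κ ≤ ((sphereSet A ω t).ncard : ℝ))
    simp only [not_le, Finset.card_univ, Fintype.card_fun, Fintype.card_fin] at hsplit
    have hsplit' := congrArg (Nat.cast : ℕ → ℝ) hsplit
    push_cast at hsplit'
    unfold tupleProp
    rw [Nat.card_eq_fintype_card, Fintype.card_subtype, le_div_iff₀ hG]
    linarith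
  by_cases hbig : (n : ℝ) ≤ κ
  · -- Spheres are nonempty, since `k ≥ 1`.
    have hempty : (Finset.univ.filter fun A : Fin k → G =>
        ((sphereSet A ω t).ncard : ℝ) < n / κ) = ∅ := by
      refine Finset.filter_eq_empty_iff.mpr fun A _ => ?_
      rw [not_lt]
      have h1 : (n : ℝ) / κ ≤ 1 := (div_le_one hκ0).mpr hbig
      have hkpos : 0 < k := by exact_mod_cast hk0
      have h2 : 0 < (sphereSet A ω t).ncard :=
        (Set.ncard_pos (Set.toFinite _)).mpr ⟨_, fun _ => ⟨0, hkpos⟩, rfl⟩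
      have h3 : (1 : ℝ) ≤ ((sphereSet A ω t).ncard : ℝ) := by exact_mod_cast h2
      linarith
    rw [hempty]
    simp only [Finset.card_empty, Nat.cast_zero]
    positivity
  · push Not at hbig
    have hKL : Real.log k ≤ Real.log n := Real.log_le_log hk0 (hκk.trans hbig.le)
    have hK : 2 * C ≤ Real.log k := by
      rw [Real.le_log_iff_exp_le hk0]
      linarith
    obtain ⟨m, hm1, hm2⟩ := exists_block_size hε0 hn0 hL1 hk hK hKL
    have hmain := card_small_sphere_le htr ω hm1 hm2 κ hκ0
    have hηκ : 2 ≤ η * κ := by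
      have h1 : 2 / η ≤ κ := by linarith
      rw [div_le_iff₀ hη] at h1
      linarith
    refine le_of_mul_le_mul_right (hmain.trans ?_) hκ0
    nlinarith
end
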